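/- Let p be a prime with p ≡ 3 (mod 4). Then the polynomial B(t) = b_p(t,−t) ∈ 𝔽_p[t] has a root t₀ in the algebraic closure of 𝔽_p with t₀ ≠ 0, t₀ ≠ 1, and t₀ ≠ −1. -/

import Mathlib

open Polynomial

/-- `bp p` is the coefficient of `x^(2A)` in `((x-1)^2 (x-t1)(x-t2))^A`, where
`A = (p^2-1)/4`, viewed as a polynomial in `x` over the polynomial ring in two
variables over `ZMod p`. -/
noncomputable def bp (p : ℕ) : MvPolynomial (Fin 2) (ZMod p) :=
  ((((X : Polynomial (MvPolynomial (Fin 2) (ZMod p))) - 1) ^ 2 *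
      (X - C (MvPolynomial.X 0)) * (X - C (MvPolynomial.X 1))) ^ ((p ^ 2 - 1) / 4)).coeff
    (2 * ((p ^ 2 - 1) / 4))

/-- `Bp p` is the univariate polynomial `B(t) = b_p(t, -t)` over `ZMod p`. -/
noncomputable def Bp (p : ℕ) : Polynomial (ZMod p) :=
  MvPolynomial.aeval ![(X : Polynomial (ZMod p)), -X] (bp p)

lemma my_coeff {R : Type*} [CommRing R] (r : R) (n k : ℕ) :
    ((X - C r) ^ n).coeff k = (-r) ^ (n - k) * (n.choose k : R) := by
  rw [sub_eq_add_neg, ← C_neg, Polynomial.coeff_X_add_C_pow]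

noncomputable def auxP (p A : ℕ) : Polynomial (ZMod p) :=
  ∑ m ∈ Finset.range (A + 1),
    Polynomial.monomial m ((-1 : ZMod p) ^ m * (A.choose m : ZMod p) * ((2 * A).choose (2 * m) : ZMod p))

lemma auxP_coeff (p A k : ℕ) : (auxP p A).coeff k =
    (-1 : ZMod p) ^ k * (A.choose k : ZMod p) * ((2 * A).choose (2 * k) : ZMod p) := by
  unfold auxP
  rw [Polynomial.finsetSum_coeff]
  simp only [Polynomial.coeff_monomial]
  rw [Finset.sum_ite_eq']
  split_ifs with h
  · rfl
  · have : A < k := by simpa using h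
    simp [Nat.choose_eq_zero_of_lt this]

lemma coeff_aux {R : Type*} [CommRing R] (s : R) (A : ℕ) :
    (((X : R[X]) ^ 2 - C s) ^ A * (X - 1) ^ (2 * A)).coeff (2 * A) =
    ∑ m ∈ Finset.range (A + 1), (-s) ^ m * (A.choose m : R) * ((2 * A).choose (2 * m) : R) := by
  have h1 : (X : R[X]) ^ 2 - C s = C (-s) + X ^ 2 := by simp; ring
  rw [h1, add_pow, Finset.sum_mul, Polynomial.finsetSum_coeff]
  refine Finset.sum_congr rfl fun m hm => ?_
  have hm' : m ≤ A := by simpa [Nat.lt_succ_iff] using hm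
  have h2 : C (-s) ^ m * ((X : R[X]) ^ 2) ^ (A - m) * (A.choose m : R[X]) * (X - 1) ^ (2 * A)
      = C ((-s) ^ m * (A.choose m : R)) * ((X - C 1) ^ (2 * A) * X ^ (2 * (A - m))) := by
    simp only [map_mul, map_pow, map_natCast, map_one, pow_mul]; ring
  rw [h2, Polynomial.coeff_C_mul]
  have h3 : 2 * A = 2 * m + 2 * (A - m) := by omega
  have h4 : ((X - C (1:R)) ^ (2 * A) * X ^ (2 * (A - m))).coeff (2 * A)
      = ((X - C (1:R)) ^ (2 * A)).coeff (2 * m) := by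
    conv_lhs => rw [show (Polynomial.coeff ((X - C (1:R)) ^ (2 * A) * X ^ (2 * (A - m))) (2 * A)) = (Polynomial.coeff ((X - C (1:R)) ^ (2 * A) * X ^ (2 * (A - m))) (2 * m + 2 * (A - m))) from by rw [← h3]]
    rw [Polynomial.coeff_mul_X_pow]
  rw [h4, my_coeff, show 2 * A - 2 * m = 2 * (A - m) by omega, pow_mul]
  simp

lemma ring_aux {R : Type*} [CommRing R] (x y : R) (A : ℕ) :
    ((x - 1) ^ 2 * (x - y) * (x - -y)) ^ A = (x ^ 2 - y ^ 2) ^ A * (x - 1) ^ (2 * A) := by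
  rw [pow_mul, ← mul_pow]
  have : (x - 1) ^ 2 * (x - y) * (x - -y) = (x ^ 2 - y ^ 2) * (x - 1) ^ 2 := by ring
  rw [this]

lemma Bp_eq (p : ℕ) : Bp p = (auxP p ((p ^ 2 - 1) / 4)).comp (X ^ 2) := by
  unfold Bp bp
  generalize (p ^ 2 - 1) / 4 = A
  have key := Polynomial.coeff_map
    (MvPolynomial.aeval ![(X : Polynomial (ZMod p)), -X] :
      MvPolynomial (Fin 2) (ZMod p) →ₐ[ZMod p] (ZMod p)[X]).toRingHom
    (p := ((((X : Polynomial (MvPolynomial (Fin 2) (ZMod p))) - 1) ^ 2 *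
      (X - C (MvPolynomial.X 0)) * (X - C (MvPolynomial.X 1))) ^ A)) (2 * A)
  refine key.symm.trans ?_
  have h : Polynomial.map (MvPolynomial.aeval ![(X : Polynomial (ZMod p)), -X] :
      MvPolynomial (Fin 2) (ZMod p) →ₐ[ZMod p] (ZMod p)[X]).toRingHom
      ((((X : Polynomial (MvPolynomial (Fin 2) (ZMod p))) - 1) ^ 2 *
      (X - C (MvPolynomial.X 0)) * (X - C (MvPolynomial.X 1))) ^ A)
      = ((X : (ZMod p)[X][X]) ^ 2 - C (X ^ 2)) ^ A * (X - 1) ^ (2 * A) := by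
    simp only [Polynomial.map_pow, Polynomial.map_mul, Polynomial.map_sub, Polynomial.map_X,
      Polynomial.map_one, Polynomial.map_C, AlgHom.toRingHom_eq_coe, RingHom.coe_coe,
      MvPolynomial.aeval_X]
    simp only [Matrix.cons_val_zero, Matrix.cons_val_one, map_neg, map_pow]
    exact ring_aux _ _ _
  rw [h, coeff_aux]
  unfold auxP
  rw [← Polynomial.coe_compRingHom_apply, map_sum]
  refine Finset.sum_congr rfl fun m _ => ?_
  rw [Polynomial.coe_compRingHom_apply, Polynomial.monomial_comp]
  simp only [map_mul, map_pow, map_natCast, map_neg, map_one]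
  rw [neg_pow (X ^ 2 : (ZMod p)[X]) m]; ring

theorem stmt9 (p : ℕ) [Fact p.Prime] (hp : p % 4 = 3) :
    ∃ t₀ : AlgebraicClosure (ZMod p),
      t₀ ≠ 0 ∧ t₀ ≠ 1 ∧ t₀ ≠ -1 ∧ Polynomial.aeval t₀ (Bp p) = 0 := by
  by_contra! hcon
  rw [Bp_eq] at hcon
  obtain ⟨n, hn⟩ : ∃ n, p = 4 * n + 3 := ⟨p / 4, by omega⟩
  obtain ⟨A, hA⟩ : ∃ A, A = (p ^ 2 - 1) / 4 := ⟨_, rfl⟩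
  rw [← hA] at hcon
  have hA1 : p ^ 2 - 1 = 4 * (4 * n ^ 2 + 6 * n + 2) := by
    have : p ^ 2 = 4 * (4 * n ^ 2 + 6 * n + 2) + 1 := by rw [hn]; ring
    omega
  have hA2 : A = 2 * (2 * n ^ 2 + 3 * n + 1) := by rw [hA, hA1]; omega
  have heven : Even A := ⟨2 * n ^ 2 + 3 * n + 1, by omega⟩
  have hpA : 4 * A + 1 = p ^ 2 := by rw [hA2, hn]; ring
  let K := AlgebraicClosure (ZMod p)
  have h4 : (4 : ZMod p) * (A : ZMod p) + 1 = 0 := by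
    have := congrArg (Nat.cast : ℕ → ZMod p) hpA
    push_cast at this
    simpa using this
  have hdeg : (auxP p A).natDegree ≤ A := by
    rw [Polynomial.natDegree_le_iff_coeff_eq_zero]
    intro N hN
    rw [auxP_coeff, Nat.choose_eq_zero_of_lt hN]; simp
  have hmonic : (auxP p A).Monic := by
    apply Polynomial.monic_of_natDegree_le_of_coeff_eq_one A hdeg
    rw [auxP_coeff, heven.neg_one_pow]; simp
  have hdeg' : (auxP p A).natDegree = A := by
    apply le_antisymm hdeg
    apply Polynomial.le_natDegree_of_ne_zero
    rw [auxP_coeff, heven.neg_one_pow]; simp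
  let Q : K[X] := (auxP p A).map (algebraMap (ZMod p) K)
  have hQm : Q.Monic := hmonic.map _
  have hsplit : Q.Splits := IsAlgClosed.splits Q
  have hroots : ∀ r ∈ Q.roots, r = 1 := by
    intro r hr
    obtain ⟨t, ht⟩ := IsAlgClosed.exists_pow_nat_eq r (n := 2) (by norm_num)
    have hr0 : Polynomial.aeval r (auxP p A) = 0 := by
      have := (Polynomial.mem_roots'.1 hr).2
      simpa [Q, Polynomial.IsRoot, Polynomial.eval_map_algebraMap] using this
    have hB : Polynomial.aeval t ((auxP p A).comp (X ^ 2)) = 0 := by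
      rw [Polynomial.aeval_comp]; simpa [ht] using hr0
    have ht0 : t ≠ 0 := by
      rintro rfl
      have : r = 0 := by rw [← ht]; simp
      rw [this, ← Polynomial.coeff_zero_eq_aeval_zero', auxP_coeff] at hr0
      simp at hr0
    by_cases h1 : t = 1
    · rw [← ht, h1]; simp
    by_cases h2 : t = -1
    · rw [← ht, h2]; simp
    exact absurd hB (hcon t ht0 h1 h2)
  have hQ : Q = (X - C 1) ^ A := by
    have hc : Q.roots.card = A := by
      rw [← hsplit.natDegree_eq_card_roots, hmonic.natDegree_map, hdeg']
    have e := hsplit.eq_prod_roots_of_monic hQm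
    rw [Multiset.eq_replicate.2 ⟨hc, hroots⟩] at e
    simpa using e
  have hP : auxP p A = (X - C 1) ^ A := by
    apply Polynomial.map_injective (algebraMap (ZMod p) K) (algebraMap (ZMod p) K).injective
    change Q = _
    rw [hQ]; simp
  have hc := congrArg (fun f => f.coeff 1) hP
  simp only [auxP_coeff, my_coeff] at hc
  have hodd : Odd (A - 1) := ⟨2 * n ^ 2 + 3 * n, by omega⟩
  have hch : (2 * A).choose (2 * 1) = A * (2 * A - 1) := by
    rw [mul_one, Nat.choose_two_right, mul_assoc, Nat.mul_div_cancel_left _ (by norm_num)]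
  rw [hodd.neg_one_pow, hch, Nat.cast_mul, Nat.cast_sub (by omega)] at hc
  push_cast [Nat.choose_one_right] at hc
  have h5 : (5 : ZMod p) = 0 := by
    generalize (A : ZMod p) = a at hc h4
    have : (32 : ZMod p) * (a * (a * (2 * a - 1)) - a) = 0 := by linear_combination (-32) * hc
    linear_combination this + (-16 * a ^ 2 + 12 * a + 5) * h4
  have h6 : p ∣ 5 := by
    rw [← ZMod.natCast_eq_zero_iff]; exact_mod_cast h5
  have := (Nat.prime_dvd_prime_iff_eq Fact.out (by norm_num)).1 h6
  omega
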